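/- Let k be a finite field with q elements of odd characteristic with q ≡ 1 (mod 3), and let K be a field extension of k of degree 2. Let a ∈ k be nonzero such that 1 − 4a is not a square in k, and let z ∈ K satisfy z² + z + a = 0. Then a is a cube in k (∃ b ∈ k, b³ = a) if and only if z is a cube in K (∃ c ∈ K, c³ = z). -/

import Mathlib

/-!
For finite fields `K / k`, the norm maps the cyclic group `Kˣ` onto `kˣ`, so `n`-th powers pull back
to a subgroup containing the `n`-th powers; when `gcd (|Kˣ|, n)` divides `|kˣ|` the two subgroups
have the same index and hence coincide, so that `z` is an `n`-th power exactly when its norm is.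
A root `z ∉ k` of `x² + b x + a` has norm `a` from `k⟮z⟯` to `k`, hence norm `a ^ [K : k⟮z⟯]` from
`K`, and raising to a power prime to `n` does not affect being an `n`-th power.
-/

open Polynomial IntermediateField

theorem map_mem_range_powMonoidHom_iff {G H : Type*} [CommGroup G] [IsCyclic G] [Finite G]
    [CommGroup H] {f : G →* H} (hf : Function.Surjective f) {n : ℕ}
    (hn : (Nat.card G).gcd n ∣ Nat.card H) {x : G} :
    f x ∈ (powMonoidHom n : H →* H).range ↔ x ∈ (powMonoidHom n : G →* G).range := by
  have : Finite H := .of_surjective f hf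
  have : IsCyclic H := isCyclic_of_surjective f hf
  have hle : (powMonoidHom n : G →* G).range ≤ (powMonoidHom n : H →* H).range.comap f := by
    rintro _ ⟨y, rfl⟩
    exact ⟨f y, (map_pow f y n).symm⟩
  have hindex : (powMonoidHom n : G →* G).range.index ≤
      ((powMonoidHom n : H →* H).range.comap f).index := by
    rw [Subgroup.index_comap_of_surjective _ hf, IsCyclic.index_powMonoidHom_range,
      IsCyclic.index_powMonoidHom_range]
    exact Nat.le_of_dvd (Nat.gcd_pos_of_pos_left _ Nat.card_pos)
      (Nat.dvd_gcd hn (Nat.gcd_dvd_right _ _))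
  have heq : (powMonoidHom n : G →* G).range = (powMonoidHom n : H →* H).range.comap f :=
    hle.eq_of_not_lt fun hlt ↦ hindex.not_gt (Subgroup.index_strictAnti hlt)
  rw [heq, Subgroup.mem_comap]

theorem unit_mem_range_powMonoidHom_iff {M : Type*} [CommMonoid M] {n : ℕ} {u : Mˣ} :
    u ∈ (powMonoidHom n : Mˣ →* Mˣ).range ↔ ∃ b : M, b ^ n = u := by
  constructor
  · rintro ⟨v, rfl⟩
    exact ⟨v, rfl⟩
  · rintro ⟨b, hb⟩
    obtain rfl | hn := eq_or_ne n 0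
    · exact ⟨1, Units.ext (by simpa using hb)⟩
    · have hunit : IsUnit b := (isUnit_pow_iff hn).mp (hb ▸ u.isUnit)
      exact ⟨hunit.unit, Units.ext hb⟩

section FiniteField

variable {k K : Type*} [Field k] [Field K] [Algebra k K]

theorem exists_pow_eq_norm_iff [Finite K] {n : ℕ}
    (hn : (Nat.card K - 1).gcd n ∣ Nat.card k - 1) {z : K} :
    (∃ b : k, b ^ n = Algebra.norm k z) ↔ ∃ c : K, c ^ n = z := by
  have : Finite k := .of_injective _ (algebraMap k K).injective
  obtain rfl | hz := eq_or_ne z 0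
  · obtain rfl | hn0 := eq_or_ne n 0
    · simp
    · simp [hn0]
  · lift z to Kˣ using hz.isUnit
    rw [← Nat.card_units, ← Nat.card_units] at hn
    rw [← unit_mem_range_powMonoidHom_iff,
      ← map_mem_range_powMonoidHom_iff (FiniteField.unitsMap_norm_surjective k K) hn,
      unit_mem_range_powMonoidHom_iff, Units.coe_map]

theorem exists_pow_eq_norm_adjoinSimple_gen_iff [Finite K] {n : ℕ}
    (hn : (Nat.card K - 1).gcd n ∣ Nat.card k - 1) {z : K}
    (hcop : n.Coprime (Module.finrank k⟮z⟯ K)) :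
    (∃ b : k, b ^ n = Algebra.norm k (AdjoinSimple.gen k z)) ↔ ∃ c : K, c ^ n = z := by
  rw [← exists_pow_eq_norm_iff hn, Algebra.norm_eq_norm_adjoin k z]
  exact (pow_mem_range_pow_of_coprime hcop.symm (Algebra.norm k (AdjoinSimple.gen k z))).symm

end FiniteField

section Quadratic

variable {k K : Type*} [CommRing k] [Ring K] [Algebra k K] {a b : k} {z : K}

theorem notMem_range_algebraMap_of_quadratic [FaithfulSMul k K]
    (hdisc : ∀ s : k, discrim 1 b a ≠ s ^ 2)
    (hroot : z ^ 2 + algebraMap k K b * z + algebraMap k K a = 0) :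
    z ∉ (algebraMap k K).range := by
  rintro ⟨y, rfl⟩
  refine quadratic_ne_zero_of_discrim_ne_sq hdisc y (FaithfulSMul.algebraMap_injective k K ?_)
  simpa [sq] using hroot

theorem isIntegral_of_quadratic
    (hroot : z ^ 2 + algebraMap k K b * z + algebraMap k K a = 0) : IsIntegral k z :=
  ⟨X ^ 2 + C b * X + C a, by monicity!, by simpa using hroot⟩

end Quadratic

section QuadraticExtension

variable {k K : Type*} [Field k] [Field K] [Algebra k K] {a b : k} {z : K}

theorem minpoly_eq_of_quadratic (hz : z ∉ (algebraMap k K).range)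
    (hroot : z ^ 2 + algebraMap k K b * z + algebraMap k K a = 0) :
    minpoly k z = X ^ 2 + C b * X + C a := by
  have hmonic : (X ^ 2 + C b * X + C a).Monic := by monicity!
  have hdeg : (X ^ 2 + C b * X + C a).degree = 2 := by compute_degree!
  have hint : IsIntegral k z := isIntegral_of_quadratic hroot
  refine (minpoly.unique_of_degree_le_degree_minpoly k z hmonic (by simpa using hroot) ?_).symm
  rw [hdeg, degree_eq_natDegree (minpoly.ne_zero hint)]
  exact_mod_cast (minpoly.two_le_natDegree_iff hint).mpr hz

theorem finrank_adjoin_of_quadratic (hz : z ∉ (algebraMap k K).range)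
    (hroot : z ^ 2 + algebraMap k K b * z + algebraMap k K a = 0) :
    Module.finrank k k⟮z⟯ = 2 := by
  rw [adjoin.finrank (isIntegral_of_quadratic hroot), minpoly_eq_of_quadratic hz hroot]
  compute_degree!

theorem norm_adjoinSimple_gen_of_quadratic (hz : z ∉ (algebraMap k K).range)
    (hroot : z ^ 2 + algebraMap k K b * z + algebraMap k K a = 0) :
    Algebra.norm k (AdjoinSimple.gen k z) = a := by
  rw [← adjoin.powerBasis_gen (isIntegral_of_quadratic hroot),
    Algebra.PowerBasis.norm_gen_eq_coeff_zero_minpoly, adjoin.powerBasis_gen, minpoly_gen,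
    ← PowerBasis.finrank, finrank_adjoin_of_quadratic hz hroot, minpoly_eq_of_quadratic hz hroot]
  simp

end QuadraticExtension

theorem cube_iff_root_cube_of_one_sub_four_mul_not_square_general
    {k K : Type*} [Field k] [Field K] [Finite K] [Algebra k K] {n e : ℕ}
    (hn : (Nat.card K - 1).gcd n ∣ Nat.card k - 1)
    (hdeg : Module.finrank k K = 2 * e) (hcop : n.Coprime e)
    {a b : k} {z : K} (hz : z ∉ (algebraMap k K).range)
    (hroot : z ^ 2 + algebraMap k K b * z + algebraMap k K a = 0) :
    (∃ x : k, x ^ n = a) ↔ (∃ y : K, y ^ n = z) := by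
  have hfinrank : Module.finrank k⟮z⟯ K = e := by
    rw [← Module.finrank_mul_finrank k k⟮z⟯ K, finrank_adjoin_of_quadratic hz hroot] at hdeg
    exact Nat.eq_of_mul_eq_mul_left two_pos hdeg
  rw [← exists_pow_eq_norm_adjoinSimple_gen_iff hn (hfinrank ▸ hcop),
    norm_adjoinSimple_gen_of_quadratic hz hroot]

/-- Let `k` be a finite field with `q` elements of odd characteristic with `q ≡ 1 (mod 3)`,
and let `K` be a field extension of `k` of degree 2. Let `a ∈ k` be nonzero such that
`1 − 4a` is not a square in `k`, and let `z ∈ K` satisfy `z² + z + a = 0`. Then `a` is a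
cube in `k` if and only if `z` is a cube in `K`. -/
theorem cube_iff_root_cube_of_one_sub_four_mul_not_square
    (k K : Type*) [Field k] [Fintype k] [Field K] [Algebra k K]
    (hodd : ringChar k ≠ 2) (hq : Fintype.card k % 3 = 1)
    (hdeg : Module.finrank k K = 2)
    (a : k) (ha : a ≠ 0) (hns : ¬ ∃ b : k, b ^ 2 = 1 - 4 * a)
    (z : K) (hz : z ^ 2 + z + algebraMap k K a = 0) :
    (∃ b : k, b ^ 3 = a) ↔ (∃ c : K, c ^ 3 = z) := by
  have : Module.Finite k K := Module.finite_of_finrank_pos (by simp [hdeg])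
  have : Finite K := Module.finite_of_finite k
  have hthree : 3 ∣ Nat.card k - 1 := by
    rw [Nat.card_eq_fintype_card]
    lia
  have hroot : z ^ 2 + algebraMap k K 1 * z + algebraMap k K a = 0 := by simpa using hz
  have hdisc (s : k) : discrim 1 1 a ≠ s ^ 2 := fun h ↦ hns ⟨s, by simp [← h, discrim]⟩
  exact cube_iff_root_cube_of_one_sub_four_mul_not_square_general
    ((Nat.gcd_dvd_right _ _).trans hthree) (e := 1) hdeg (Nat.coprime_one_right 3)
    (notMem_range_algebraMap_of_quadratic hdisc hroot) hroot
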